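/- For all n, m ≥ 0 and generic tuples ū=(u_1,…,u_n), v̄=(v_1,…,v_m), the multiple action of the modified diagonal operator ν_{11} on a modified Bethe vector is ν_{11}(ū) ν_{12}(v̄) |0⟩ = β_2^n Σ_{w̄ ⇒ {w̄_I, w̄_II}} (−β_2)^{−l} λ_1(w̄_I)·\bar{K}^{(1)}_{n,l}(ū | w̄_I − c)·f(w̄_II, w̄_I)·ν_{12}(w̄_II) |0⟩, where w̄ = {ū, v̄}, the sum runs over all partitions of w̄ into two disjoint subtuples with no restriction on cardinalities, and l = #w̄_I. -/

import Mathlib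

open scoped BigOperators

noncomputable section

/-- The rational function `g(u,v) = c/(u-v)`. -/
def gC (c u v : ℂ) : ℂ := c / (u - v)

/-- The rational function `f(u,v) = (u-v+c)/(u-v)`. -/
def fC (c u v : ℂ) : ℂ := (u - v + c) / (u - v)

/-- The rational function `h(u,v) = (u-v+c)/c`. -/
def hC (c u v : ℂ) : ℂ := (u - v + c) / c

/-- A family of parameters is generic if all pairwise differences avoid `0, ±c, ±2c`. -/
def Generic (c : ℂ) {ι : Type*} (w : ι → ℂ) : Prop :=
  ∀ i j, i ≠ j → w i - w j ≠ 0 ∧ w i - w j ≠ c ∧ w i - w j ≠ -c ∧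
    w i - w j ≠ 2 * c ∧ w i - w j ≠ -2 * c

/-- The modified Izergin determinant `K^{(z)}(x̄|ȳ)`. -/
def KIz (c z : ℂ) {ι κ : Type*} [Fintype ι] [Fintype κ] [DecidableEq κ]
    (x : ι → ℂ) (y : κ → ℂ) : ℂ :=
  Matrix.det (Matrix.of fun j k : κ =>
    -z * (if j = k then 1 else 0) +
      (∏ i, fC c (x i) (y j)) * (∏ i ∈ Finset.univ.erase j, fC c (y j) (y i))
        / hC c (y j) (y k))

/-- The conjugated modified Izergin determinant: `c` is replaced by `-c`. -/
def KIzBar (c z : ℂ) {ι κ : Type*} [Fintype ι] [Fintype κ] [DecidableEq κ]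
    (x : ι → ℂ) (y : κ → ℂ) : ℂ :=
  KIz (-c) z x y

/-- Restriction of a tuple to a subtuple indexed by a `Finset`. -/
def restr {p : ℕ} (w : Fin p → ℂ) (s : Finset (Fin p)) : {x // x ∈ s} → ℂ :=
  fun i => w i.1

/-- Double product `f(w̄_s, w̄_t)` over two subtuples of a tuple. -/
def fSS (c : ℂ) {p : ℕ} (w : Fin p → ℂ) (s t : Finset (Fin p)) : ℂ :=
  ∏ i ∈ s, ∏ j ∈ t, fC c (w i) (w j)

/-- Ordered product of operators over a subtuple (the operators pairwise commute,
so the order is irrelevant). -/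
def opProd {V : Type*} [AddCommGroup V] [Module ℂ V] {p : ℕ}
    (op : ℂ → Module.End ℂ V) (w : Fin p → ℂ) (s : Finset (Fin p)) : Module.End ℂ V :=
  ((s.sort (· ≤ ·)).map (fun i => op (w i))).prod

/-- The index subsets of a partition of `Fin p` into three parts. -/
def parts {p : ℕ} (σ : Fin p → Fin 3) (k : Fin 3) : Finset (Fin p) :=
  Finset.univ.filter (fun i => σ i = k)


lemma gC_three (c x a i : ℂ) (h1 : x ≠ a) (h2 : x ≠ i) (h3 : a ≠ i) :
    gC c x a * gC c x i = gC c x a * gC c a i + gC c x i * gC c i a := by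
  have h1' := sub_ne_zero.2 h1
  have h2' := sub_ne_zero.2 h2
  have h3' := sub_ne_zero.2 h3
  have h4' := sub_ne_zero.2 h3.symm
  unfold gC
  rw [show i - a = -(a - i) by ring, div_neg]
  field_simp
  ring

lemma fC_eq (c x a : ℂ) (h : x ≠ a) : fC c x a = 1 + gC c x a := by
  have h' := sub_ne_zero.2 h
  unfold fC gC
  field_simp

lemma gC_swap (c x a : ℂ) : gC c x a = - gC c a x := by
  unfold gC
  rw [show x - a = -(a - x) by ring, div_neg]

lemma fC_neg (c x a : ℂ) : fC (-c) x a = fC c a x := by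
  unfold fC
  rw [← neg_div_neg_eq]
  congr 1 <;> ring

lemma gC_neg (c x a : ℂ) : gC (-c) x a = gC c a x := by
  unfold gC
  rw [← neg_div_neg_eq]
  congr 1 <;> ring

lemma prod_fC_left {ι : Type*} [DecidableEq ι] (c : ℂ) (w : ι → ℂ)
    (hw : Function.Injective w) (R : Finset ι) : ∀ x : ℂ, (∀ i ∈ R, x ≠ w i) →
    ∏ i ∈ R, fC c x (w i)
      = 1 + ∑ i ∈ R, gC c x (w i) * ∏ j ∈ R.erase i, fC c (w i) (w j) := by
  induction R using Finset.induction_on with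
  | empty => intro x _; simp
  | insert a R ha ih =>
    intro x hx
    have hxa := hx a (Finset.mem_insert_self _ _)
    have hxR : ∀ i ∈ R, x ≠ w i := fun i hi => hx i (Finset.mem_insert_of_mem hi)
    have haR : ∀ i ∈ R, w a ≠ w i := fun i hi h => ha (hw h ▸ hi)
    rw [Finset.prod_insert ha, Finset.sum_insert ha, Finset.erase_insert ha, ih x hxR,
      ih (w a) haR, fC_eq c x _ hxa]
    have : ∀ i ∈ R, gC c x (w i) * ∏ j ∈ (insert a R).erase i, fC c (w i) (w j)
        = (gC c x (w i) + gC c x (w a) * gC c x (w i) - gC c x (w a) * gC c (w a) (w i)) *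
          ∏ j ∈ R.erase i, fC c (w i) (w j) := by
      intro i hi
      have hia : i ≠ a := fun h => ha (h ▸ hi)
      rw [Finset.erase_insert_of_ne hia.symm, Finset.prod_insert (by simp [ha]),
        fC_eq c (w i) (w a) (haR i hi).symm,
        gC_three c x (w a) (w i) hxa (hxR i hi) (haR i hi)]
      ring
    rw [Finset.sum_congr rfl this]
    simp only [add_mul, sub_mul, Finset.sum_add_distrib, Finset.sum_sub_distrib, mul_assoc,
      ← Finset.mul_sum]
    ring

lemma prod_fC_right {ι : Type*} [DecidableEq ι] (c : ℂ) (w : ι → ℂ)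
    (hw : Function.Injective w) (R : Finset ι) (x : ℂ) (hx : ∀ i ∈ R, x ≠ w i) :
    ∏ i ∈ R, fC c (w i) x
      = 1 + ∑ i ∈ R, gC c (w i) x * ∏ j ∈ R.erase i, fC c (w j) (w i) := by
  have := prod_fC_left (-c) w hw R x hx
  simpa only [fC_neg, gC_neg] using this

/-- Reindexing of a double sum over a subset and an element of its complement. -/
lemma sum_powerset_sdiff {ι M : Type*} [DecidableEq ι] [AddCommMonoid M] (W : Finset ι)
    (G : Finset ι → ι → M) :
    ∑ T ∈ W.powerset, ∑ i ∈ W \ T, G T i = ∑ T ∈ W.powerset, ∑ i ∈ T, G (T.erase i) i := by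
  rw [Finset.sum_sigma', Finset.sum_sigma']
  refine Finset.sum_bij' (fun p _ => ⟨insert p.2 p.1, p.2⟩) (fun p _ => ⟨p.1.erase p.2, p.2⟩)
    ?_ ?_ ?_ ?_ ?_
  · rintro ⟨T, i⟩ h
    simp only [Finset.mem_sigma, Finset.mem_powerset, Finset.mem_sdiff] at h ⊢
    exact ⟨Finset.insert_subset h.2.1 h.1, Finset.mem_insert_self _ _⟩
  · rintro ⟨T, i⟩ h
    simp only [Finset.mem_sigma, Finset.mem_powerset, Finset.mem_sdiff] at h ⊢
    exact ⟨(Finset.erase_subset _ _).trans h.1, h.1 h.2, Finset.notMem_erase _ _⟩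
  · rintro ⟨T, i⟩ h
    simp only [Finset.mem_sigma, Finset.mem_powerset, Finset.mem_sdiff] at h ⊢
    rw [Finset.erase_insert h.2.2]
  · rintro ⟨T, i⟩ h
    simp only [Finset.mem_sigma, Finset.mem_powerset, Finset.mem_sdiff] at h ⊢
    rw [Finset.insert_erase h.2]
  · rintro ⟨T, i⟩ h
    simp only [Finset.mem_sigma, Finset.mem_powerset, Finset.mem_sdiff] at h ⊢
    rw [Finset.erase_insert h.2.2]

section fss
variable {p : ℕ} (c : ℂ) (w : Fin p → ℂ)

lemma fSS_insert_left (a : Fin p) (s t : Finset (Fin p)) (ha : a ∉ s) :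
    fSS c w (insert a s) t = (∏ j ∈ t, fC c (w a) (w j)) * fSS c w s t := by
  unfold fSS; rw [Finset.prod_insert ha]

lemma fSS_insert_right (a : Fin p) (s t : Finset (Fin p)) (ha : a ∉ t) :
    fSS c w s (insert a t) = (∏ i ∈ s, fC c (w i) (w a)) * fSS c w s t := by
  unfold fSS
  rw [← Finset.prod_mul_distrib]
  exact Finset.prod_congr rfl fun i _ => Finset.prod_insert ha

/-- Subset expansion of the (conjugated, shifted) modified Izergin determinant. -/
def subsetSum (a : Fin p → ℂ) (S : Finset (Fin p)) : ℂ :=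
  ∑ T ∈ S.powerset, (-1) ^ (S \ T).card * (∏ j ∈ T, a j) * fSS c w (S \ T) T

lemma sdiff_erase_eq {ι : Type*} [DecidableEq ι] {S T : Finset ι} {i : ι} (hi : i ∈ T) (hT : T ⊆ S) :
    S \ T.erase i = insert i (S \ T) := by
  ext j; by_cases h : j = i
  · subst h; simp [hT hi]
  · simp [h]

lemma subsetSum_one (hw : Function.Injective w) (S : Finset (Fin p)) (hS : S.Nonempty) :
    subsetSum c w (fun _ => 1) S = 0 := by
  obtain ⟨x, hx⟩ := hS
  obtain ⟨S', hx', rfl⟩ : ∃ S', x ∉ S' ∧ S = insert x S' :=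
    ⟨S.erase x, Finset.notMem_erase _ _, (Finset.insert_erase hx).symm⟩
  unfold subsetSum
  rw [Finset.sum_powerset_insert hx', ← Finset.sum_add_distrib]
  have hne : ∀ i ∈ S', w x ≠ w i := fun i hi h => hx' (hw h ▸ hi)
  have key : ∀ T ∈ S'.powerset,
      ((-1) ^ (insert x S' \ T).card * (∏ j ∈ T, (1 : ℂ)) * fSS c w (insert x S' \ T) T +
        (-1) ^ (insert x S' \ insert x T).card * (∏ j ∈ insert x T, (1 : ℂ)) *
          fSS c w (insert x S' \ insert x T) (insert x T))
      = (∑ i ∈ S' \ T, (-1) ^ (S' \ T).card * fSS c w (S' \ T) T *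
            (gC c (w i) (w x) * ∏ j ∈ (S' \ T).erase i, fC c (w j) (w i)))
        - ∑ i ∈ T, (-1) ^ (S' \ T).card * fSS c w (S' \ T) T *
            (gC c (w x) (w i) * ∏ j ∈ T.erase i, fC c (w i) (w j)) := by
    intro T hT
    rw [Finset.mem_powerset] at hT
    have hxT : x ∉ T := fun h => hx' (hT h)
    have hxS : x ∉ S' \ T := fun h => hx' (Finset.mem_sdiff.1 h).1
    have h1 : insert x S' \ T = insert x (S' \ T) := Finset.insert_sdiff_of_notMem _ hxT
    have h2 : insert x S' \ insert x T = S' \ T := by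
      rw [Finset.insert_sdiff_insert, Finset.sdiff_insert_of_notMem hx']
    rw [h1, h2, fSS_insert_left _ _ _ _ _ hxS, fSS_insert_right _ _ _ _ _ hxT,
      Finset.card_insert_of_notMem hxS, ← Finset.mul_sum, ← Finset.mul_sum,
      prod_fC_left c w hw T (w x) (fun i hi => hne i (hT hi)),
      prod_fC_right c w hw (S' \ T) (w x) (fun i hi => hne i (Finset.mem_sdiff.1 hi).1)]
    simp only [Finset.prod_const_one]
    ring
  rw [Finset.sum_congr rfl key, Finset.sum_sub_distrib, sum_powerset_sdiff, sub_eq_zero]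
  refine Finset.sum_congr rfl fun T hT => Finset.sum_congr rfl fun i hi => ?_
  rw [Finset.mem_powerset] at hT
  have hi' : i ∉ S' \ T := by simp [hi]
  have e : fSS c w (S' \ T) T = (∏ j ∈ S' \ T, fC c (w j) (w i)) * fSS c w (S' \ T) (T.erase i) := by
    rw [← fSS_insert_right _ _ _ _ _ (Finset.notMem_erase _ _), Finset.insert_erase hi]
  rw [sdiff_erase_eq hi hT, Finset.card_insert_of_notMem hi', fSS_insert_left _ _ _ _ _ hi',
    Finset.erase_insert hi', e, gC_swap c (w i)]
  ring

lemma subsetSum_rec (hw : Function.Injective w) (a a' : Fin p → ℂ) (x : Fin p)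
    (S : Finset (Fin p)) (hxS : x ∉ S)
    (ha : ∀ j ∈ S, a' j * fC c (w x) (w j) = a j) :
    (∏ j ∈ S, fC c (w x) (w j)) * subsetSum c w a' S
      = subsetSum c w a S - ∑ i ∈ S, gC c (w x) (w i) * (∏ j ∈ S.erase i, fC c (w i) (w j)) *
          subsetSum c w a (S.erase i) := by
  have hne : ∀ i ∈ S, w x ≠ w i := fun i hi h => hxS (hw h ▸ hi)
  have key : (∏ j ∈ S, fC c (w x) (w j)) * subsetSum c w a' S
      = subsetSum c w a S + ∑ T ∈ S.powerset, ∑ i ∈ S \ T,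
          (-1) ^ (S \ T).card * (∏ j ∈ T, a j) * fSS c w (S \ T) T *
            (gC c (w x) (w i) * ∏ j ∈ (S \ T).erase i, fC c (w i) (w j)) := by
    unfold subsetSum
    rw [Finset.mul_sum, ← Finset.sum_add_distrib]
    refine Finset.sum_congr rfl fun T hT => ?_
    rw [Finset.mem_powerset] at hT
    rw [← Finset.mul_sum, ← Finset.prod_sdiff hT,
      prod_fC_left c w hw (S \ T) (w x) (fun i hi => hne i (Finset.mem_sdiff.1 hi).1),
      ← Finset.prod_congr rfl (fun j hj => ha j (hT hj)), Finset.prod_mul_distrib]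
    ring
  rw [key, sub_eq_add_neg, ← Finset.sum_neg_distrib]
  congr 1
  rw [Finset.sum_comm' (t' := S) (s' := fun i => (S.erase i).powerset)]
  · refine Finset.sum_congr rfl fun i hi => ?_
    unfold subsetSum
    rw [Finset.mul_sum, ← Finset.sum_neg_distrib]
    refine Finset.sum_congr rfl fun T hT => ?_
    rw [Finset.mem_powerset] at hT
    have hiT : i ∉ T := fun h => (Finset.notMem_erase i S) (hT h)
    have hi' : i ∉ S.erase i \ T := by simp
    have h1 : S \ T = insert i (S.erase i \ T) := by
      ext j; by_cases h : j = i
      · subst h; simp [hi, hiT]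
      · simp [h]
    rw [h1, Finset.erase_insert hi', Finset.card_insert_of_notMem hi',
      fSS_insert_left _ _ _ _ _ hi', ← Finset.prod_sdiff hT]
    ring
  · intro T i
    simp only [Finset.mem_powerset, Finset.mem_sdiff, Finset.subset_erase]
    tauto

lemma subsetSum_insert (a a' : Fin p → ℂ) (x : Fin p)
    (S : Finset (Fin p)) (hxS : x ∉ S) (hx : a' x = 0)
    (ha : ∀ j ∈ S, a' j * fC c (w x) (w j) = a j) :
    subsetSum c w a' (insert x S) = - subsetSum c w a S := by
  unfold subsetSum
  rw [Finset.sum_powerset_insert hxS, ← Finset.sum_neg_distrib]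
  have h0 : ∑ T ∈ S.powerset, (-1 : ℂ) ^ (insert x S \ insert x T).card *
      (∏ j ∈ insert x T, a' j) * fSS c w (insert x S \ insert x T) (insert x T) = 0 := by
    refine Finset.sum_eq_zero fun T hT => ?_
    rw [Finset.prod_eq_zero (Finset.mem_insert_self x T) hx]
    ring
  rw [h0, add_zero]
  refine Finset.sum_congr rfl fun T hT => ?_
  rw [Finset.mem_powerset] at hT
  have hxT : x ∉ T := fun h => hxS (hT h)
  have hx' : x ∉ S \ T := fun h => hxS (Finset.mem_sdiff.1 h).1
  have h1 : insert x S \ T = insert x (S \ T) := Finset.insert_sdiff_of_notMem _ hxT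
  rw [h1, fSS_insert_left _ _ _ _ _ hx', Finset.card_insert_of_notMem hx',
    ← Finset.prod_congr rfl (fun j hj => ha j (hT hj)), Finset.prod_mul_distrib]
  ring

end fss

/-- The Cauchy determinant in the form needed here. -/
lemma cauchy_det (c : ℂ) (hc : c ≠ 0) (κ : Type) [Fintype κ] [DecidableEq κ] : ∀ y : κ → ℂ,
    (∀ i j, y i - y j + c ≠ 0) →
    Matrix.det (Matrix.of fun j k : κ => c / (y k - y j + c))
      = ∏ j, ∏ k, if j = k then 1 else (y k - y j) / (y k - y j + c) := by
  refine Fintype.induction_empty_option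
    (P := fun κ _ => ∀ [DecidableEq κ] (y : κ → ℂ), (∀ i j, y i - y j + c ≠ 0) →
    Matrix.det (Matrix.of fun j k : κ => c / (y k - y j + c))
      = ∏ j, ∏ k, if j = k then 1 else (y k - y j) / (y k - y j + c)) ?_ ?_ ?_ κ
  · intro α β _ e ih _ y hy
    classical
    let _ : Fintype α := Fintype.ofEquiv β e.symm
    have := ih (y ∘ e) (fun i j => hy _ _)
    rw [← Matrix.det_submatrix_equiv_self e, ← Equiv.prod_comp e]
    simp_rw [← Equiv.prod_comp e (fun k => ite (e _ = k) _ _)]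
    convert this using 5
    · ext i j; rfl
    · exact e.injective.eq_iff
    · rfl
    · rfl
  · intro _ y hy
    simp
  · intro α _ ih _ y hy
    classical
    have ih' := ih (fun i => y (some i)) (fun i j => hy _ _)
    rw [← Matrix.det_submatrix_equiv_self (Equiv.optionEquivSumPUnit.{0} α).symm]
    have hb : (Matrix.of fun j k : Option α => c / (y k - y j + c)).submatrix
        (Equiv.optionEquivSumPUnit.{0} α).symm (Equiv.optionEquivSumPUnit.{0} α).symm
        = Matrix.fromBlocks (Matrix.of fun j k : α => c / (y (some k) - y (some j) + c))
          (Matrix.of fun j _ => c / (y none - y (some j) + c))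
          (Matrix.of fun _ k => c / (y (some k) - y none + c)) 1 := by
      ext (i | i) (j | j) <;> simp [hc]
    rw [hb, Matrix.det_fromBlocks_one₂₂]
    have hm : (Matrix.of fun j k : α => c / (y (some k) - y (some j) + c)) -
        (Matrix.of fun (j : α) (_ : PUnit) => c / (y none - y (some j) + c)) *
          (Matrix.of fun (_ : PUnit) (k : α) => c / (y (some k) - y none + c))
        = Matrix.of fun j k : α => ((y none - y (some j)) / (y none - y (some j) + c)) *
          (Matrix.of fun j k : α => ((y (some k) - y none) / (y (some k) - y none + c)) *
          (Matrix.of fun j k : α => c / (y (some k) - y (some j) + c)) j k) j k := by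
      ext j k
      have h1 := hy none (some j)
      have h2 := hy (some k) none
      have h3 := hy (some k) (some j)
      simp only [Matrix.sub_apply, Matrix.mul_apply, Matrix.of_apply, Finset.univ_unique,
        Finset.sum_singleton]
      field_simp
      ring
    rw [hm, Matrix.det_mul_column, Matrix.det_mul_row, ih', Fintype.prod_option]
    simp only [Fintype.prod_option, Finset.prod_mul_distrib]
    simp
    ring

/-- Expansion of a determinant of the form `det(M - 1)` in principal minors. -/
lemma det_sub_one_expand {κ : Type*} [Fintype κ] [DecidableEq κ] (M : Matrix κ κ ℂ) :
    Matrix.det (M + Matrix.of fun i j => -(1 : Matrix κ κ ℂ) i j)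
      = ∑ T : Finset κ, (-1) ^ (Tᶜ).card *
        (M.submatrix (Subtype.val : T → κ) (Subtype.val : T → κ)).det := by
  have h := (Matrix.detRowAlternating : (κ → ℂ) [⋀^κ]→ₗ[ℂ] ℂ).map_add_univ
    (fun i => M i) (fun i => -(1 : Matrix κ κ ℂ) i)
  refine Eq.trans h (Finset.sum_congr rfl fun T _ => ?_)
  rw [← Matrix.det_piecewise_one_eq_submatrix_det]
  have hs : T.piecewise (fun i => M i) (fun i => -(1 : Matrix κ κ ℂ) i)
      = fun i => (if i ∈ T then (1 : ℂ) else -1) •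
        (T.piecewise M.row (1 : Matrix κ κ ℂ).row) i := by
    funext i
    by_cases hi : i ∈ T <;> simp [Finset.piecewise, hi, Matrix.row]
  rw [hs]
  refine (AlternatingMap.map_smul_univ _ _ _).trans ?_
  congr 1
  rw [Finset.prod_ite]
  simp [Finset.filter_not, Finset.compl_eq_univ_sdiff]

lemma KIz_expand (c : ℂ) (hc : c ≠ 0) {ι κ : Type} [Fintype ι] [Fintype κ] [DecidableEq κ]
    (x : ι → ℂ) (y : κ → ℂ) (hy : ∀ i j, y i - y j + c ≠ 0) (hinj : Function.Injective y) :
    KIz (-c) 1 x (fun i => y i - c) = ∑ T : Finset κ, (-1) ^ (Tᶜ).card *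
      (∏ j ∈ T, ∏ i, fC (-c) (x i) (y j - c)) * ∏ i ∈ Tᶜ, ∏ j ∈ T, fC c (y i) (y j) := by
  classical
  set A : κ → ℂ := fun j => (∏ i, fC (-c) (x i) (y j - c)) *
    (∏ i ∈ Finset.univ.erase j, fC c (y i) (y j)) with hA
  have h0 : KIz (-c) 1 x (fun i => y i - c)
      = Matrix.det ((Matrix.of fun j k => A j * (c / (y k - y j + c))) +
        Matrix.of fun i j => -(1 : Matrix κ κ ℂ) i j) := by
    unfold KIz
    congr 1
    ext j k
    simp only [Matrix.of_apply, Matrix.add_apply, hA, Matrix.one_apply]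
    rw [add_comm]
    congr 1
    · rw [div_eq_mul_inv]
      congr 1
      · congr 1
        refine Finset.prod_congr rfl fun i _ => ?_
        rw [fC_neg]; unfold fC; ring
      · unfold hC
        rw [inv_div, ← neg_div_neg_eq]
        congr 1 <;> ring
    · ring
  rw [h0, det_sub_one_expand]
  refine Finset.sum_congr rfl fun T _ => ?_
  rw [mul_assoc]
  congr 1
  have h1 : (Matrix.of fun j k => A j * (c / (y k - y j + c))).submatrix
      (Subtype.val : T → κ) (Subtype.val : T → κ)
      = Matrix.of fun j k : T => A j * (Matrix.of fun j k : T => c / (y k - y j + c)) j k := by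
    ext; simp
  rw [h1, Matrix.det_mul_column, cauchy_det c hc T (fun i => y i) (fun i j => hy _ _)]
  have h2 : ∀ j : T, (∏ k : T, if j = k then (1 : ℂ) else (y k - y j) / (y k - y j + c))
      = ∏ k ∈ T.erase j, (y k - y j) / (y k - y j + c) := by
    intro j
    have e1 : (∏ k : T, if j = k then (1 : ℂ) else (y k - y j) / (y k - y j + c))
        = ∏ k : T, (fun k : κ => if (j : κ) = k then (1 : ℂ)
            else (y k - y j) / (y k - y j + c)) k :=
      Finset.prod_congr rfl fun k _ => by simp only [Subtype.ext_iff]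
    rw [e1, Finset.prod_coe_sort T (fun k : κ => if (j : κ) = k then (1 : ℂ)
            else (y k - y j) / (y k - y j + c)), ← Finset.mul_prod_erase _ _ j.2, if_pos rfl, one_mul]
    exact Finset.prod_congr rfl fun k hk => if_neg (Finset.ne_of_mem_erase hk).symm
  simp_rw [h2]
  rw [Finset.prod_coe_sort T A,
    Finset.prod_coe_sort T (fun j => ∏ k ∈ T.erase j, (y k - y j) / (y k - y j + c)),
    Finset.prod_comm (s := Tᶜ), ← Finset.prod_mul_distrib, ← Finset.prod_mul_distrib]
  refine Finset.prod_congr rfl fun j hj => ?_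
  rw [hA]
  have hu : Finset.univ.erase j = Tᶜ ∪ T.erase j := by
    ext i; by_cases h : i = j
    · subst h; simp [hj]
    · simp [h, em']
  have hd : Disjoint Tᶜ (T.erase j) :=
    Finset.disjoint_left.2 fun i hi hi' => (Finset.mem_compl.1 hi) (Finset.mem_of_mem_erase hi')
  have h3 : (∏ i ∈ T.erase j, fC c (y i) (y j)) *
      ∏ k ∈ T.erase j, (y k - y j) / (y k - y j + c) = 1 := by
    rw [← Finset.prod_mul_distrib]
    refine Finset.prod_eq_one fun i hi => ?_
    have := sub_ne_zero.2 (hinj.ne (Finset.ne_of_mem_erase hi))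
    have := hy i j
    unfold fC
    field_simp
  simp only
  rw [hu, Finset.prod_union hd, mul_assoc, mul_assoc, h3, mul_one]

lemma KIz_eq_subsetSum {n p : ℕ} (c : ℂ) (hc : c ≠ 0) (u : Fin n → ℂ) (w : Fin p → ℂ)
    (hy : ∀ i j, w i - w j + c ≠ 0) (hinj : Function.Injective w) (S : Finset (Fin p)) :
    KIzBar c 1 u (fun i => restr w S i - c)
      = subsetSum c w (fun j => ∏ i, fC (-c) (u i) (w j - c)) S := by
  unfold KIzBar subsetSum
  rw [KIz_expand c hc u (restr w S) (fun i j => hy _ _)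
    (fun i j h => Subtype.ext (hinj h))]
  have hcompl : ∀ T : Finset S, S \ T.map (Function.Embedding.subtype _)
      = (Tᶜ).map (Function.Embedding.subtype _) := by
    intro T
    ext i
    simp only [Finset.mem_sdiff, Finset.mem_map, Finset.mem_compl,
      Function.Embedding.subtype_apply, Subtype.exists, exists_and_right, exists_eq_right]
    constructor
    · rintro ⟨h1, h2⟩
      exact ⟨h1, fun h => h2 ⟨h1, h⟩⟩
    · rintro ⟨h1, h2⟩
      exact ⟨h1, fun ⟨_, h⟩ => h2 h⟩
  refine Finset.sum_bij' (fun T _ => T.map (Function.Embedding.subtype _))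
    (fun t _ => t.subtype (· ∈ S)) ?_ ?_ ?_ ?_ ?_
  · intro T _
    rw [Finset.mem_powerset]
    intro i hi
    obtain ⟨j, _, rfl⟩ := Finset.mem_map.1 hi
    exact j.2
  · intro t _; exact Finset.mem_univ _
  · intro T _
    ext i; simp
  · intro t ht
    rw [Finset.mem_powerset] at ht
    rw [Finset.subtype_map, Finset.filter_true_of_mem ht]
  · intro T _
    rw [hcompl]
    unfold fSS
    simp only [Finset.card_map, Finset.prod_map, Function.Embedding.subtype_apply, restr]

section ops
variable {V : Type*} [AddCommGroup V] [Module ℂ V]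

lemma opProd_empty {p : ℕ} (op : ℂ → Module.End ℂ V) (w : Fin p → ℂ) : opProd op w ∅ = 1 := by
  simp [opProd]

lemma opProd_insert {p : ℕ} (op : ℂ → Module.End ℂ V)
    (hop : ∀ x y, op x * op y = op y * op x) (w : Fin p → ℂ) (a : Fin p) (s : Finset (Fin p))
    (ha : a ∉ s) : opProd op w (insert a s) = op (w a) * opProd op w s := by
  unfold opProd
  rw [← List.prod_cons, ← List.map_cons (f := fun i => op (w i))]
  refine List.Perm.prod_eq' ?_ ?_
  · refine List.Perm.map _ ?_
    rw [← Multiset.coe_eq_coe, ← Multiset.cons_coe, Finset.sort_eq, Finset.sort_eq,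
      Finset.insert_val_of_notMem ha]
  · rw [List.pairwise_map]
    exact List.pairwise_of_forall (fun x y => hop _ _)

lemma opProd_map {p q : ℕ} (op : ℂ → Module.End ℂ V)
    (hop : ∀ x y, op x * op y = op y * op x) (w : Fin p → ℂ) (e : Fin q ↪ Fin p)
    (s : Finset (Fin q)) : opProd op w (s.map e) = opProd op (fun i => w (e i)) s := by
  induction s using Finset.induction_on with
  | empty => simp [opProd_empty]
  | insert a s ha ih =>
    rw [Finset.map_insert, opProd_insert op hop _ _ _ (by simpa using ha),
      opProd_insert op hop _ _ _ ha, ih]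

/-- Action of one operator `A` on a Bethe vector. -/
lemma single_action {p : ℕ} (c β : ℂ) (A B : ℂ → Module.End ℂ V) (vac : V) (lam : ℂ → ℂ)
    (hAB : ∀ x y, x ≠ y → A x * B y = fC c y x • (B y * A x) + gC c x y • (B x * A y))
    (hB : ∀ x y, B x * B y = B y * B x)
    (hvac : ∀ x, A x vac = lam x • vac + β • B x vac)
    (w : Fin p → ℂ) (hw : Function.Injective w) (R : Finset (Fin p)) :
    ∀ x : ℂ, (∀ i ∈ R, x ≠ w i) →
    A x (opProd B w R vac) = β • B x (opProd B w R vac)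
      + (lam x * ∏ i ∈ R, fC c (w i) x) • opProd B w R vac
      + ∑ i ∈ R, (gC c x (w i) * lam (w i) * ∏ j ∈ R.erase i, fC c (w j) (w i)) •
          B x (opProd B w (R.erase i) vac) := by
  induction R using Finset.induction_on with
  | empty => intro x _; simp [opProd_empty, hvac, add_comm]
  | insert a R ha ih =>
    intro x hx
    have hxa := hx a (Finset.mem_insert_self _ _)
    have hxR : ∀ i ∈ R, x ≠ w i := fun i hi => hx i (Finset.mem_insert_of_mem hi)
    have haR : ∀ i ∈ R, w a ≠ w i := fun i hi h => ha (hw h ▸ hi)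
    have hBB : ∀ y z v, B y (B z v) = B z (B y v) := fun y z v => by
      rw [← Module.End.mul_apply, hB, Module.End.mul_apply]
    have hAB' : ∀ v, A x (B (w a) v) = fC c (w a) x • B (w a) (A x v)
        + gC c x (w a) • B x (A (w a) v) := fun v => by
      rw [← Module.End.mul_apply, hAB x (w a) hxa]; rfl
    have hsum : ∀ i ∈ R, (gC c x (w i) * lam (w i) *
          ∏ j ∈ (insert a R).erase i, fC c (w j) (w i)) •
          B x (opProd B w ((insert a R).erase i) vac)
        = (fC c (w a) x * (gC c x (w i) * lam (w i) * ∏ j ∈ R.erase i, fC c (w j) (w i))) •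
            B (w a) (B x (opProd B w (R.erase i) vac))
          + (gC c x (w a) * (gC c (w a) (w i) * lam (w i) * ∏ j ∈ R.erase i, fC c (w j) (w i))) •
            B x (B (w a) (opProd B w (R.erase i) vac)) := by
      intro i hi
      have hia : i ≠ a := fun h => ha (h ▸ hi)
      have ha' : a ∉ R.erase i := by simp [ha]
      rw [Finset.erase_insert_of_ne hia.symm, Finset.prod_insert ha', opProd_insert B hB _ _ _ ha',
        hBB (w a) x, Module.End.mul_apply, ← add_smul]
      congr 1
      have h3 := gC_three c x (w a) (w i) hxa (hxR i hi) (haR i hi)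
      rw [fC_eq c (w a) (w i) (haR i hi), fC_eq c (w a) x hxa.symm, gC_swap c (w a) x]
      rw [gC_swap c (w i) (w a)] at h3
      linear_combination (lam (w i) * ∏ j ∈ R.erase i, fC c (w j) (w i)) * h3
    rw [opProd_insert B hB _ _ _ ha, Module.End.mul_apply, hAB', ih x hxR, ih (w a) haR,
      Finset.sum_insert ha, Finset.erase_insert ha, Finset.prod_insert ha,
      Finset.sum_congr rfl hsum, Finset.sum_add_distrib]
    simp only [map_add, map_sum, map_smul, smul_add, Finset.smul_sum, smul_smul]
    rw [hBB (w a) x (opProd B w R vac), fC_eq c (w a) x hxa.symm, gC_swap c (w a) x]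
    module

lemma core {p : ℕ} (c β : ℂ) (hc : c ≠ 0) (hβ : β ≠ 0) (A B : ℂ → Module.End ℂ V) (vac : V)
    (lam : ℂ → ℂ)
    (hAB : ∀ x y, x ≠ y → A x * B y = fC c y x • (B y * A x) + gC c x y • (B x * A y))
    (hA : ∀ x y, A x * A y = A y * A x)
    (hB : ∀ x y, B x * B y = B y * B x)
    (hvac : ∀ x, A x vac = lam x • vac + β • B x vac)
    (w : Fin p → ℂ) (hw : Function.Injective w) (hy : ∀ i j, w i - w j + c ≠ 0)
    (R U : Finset (Fin p)) (hUR : Disjoint U R) :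
    opProd A w U (opProd B w R vac) = β ^ U.card • ∑ s ∈ (U ∪ R).powerset,
      (((-β)⁻¹) ^ s.card * (∏ i ∈ s, lam (w i)) *
        subsetSum c w (fun j => ∏ i ∈ U, fC (-c) (w i) (w j - c)) s *
        fSS c w ((U ∪ R) \ s) s) • opProd B w ((U ∪ R) \ s) vac := by
  induction U using Finset.induction_on with
  | empty =>
    rw [Finset.sum_eq_single ∅]
    · simp [opProd_empty, subsetSum, fSS]
    · intro s _ hs
      simp only [Finset.prod_empty]
      rw [subsetSum_one c w hw s (Finset.nonempty_iff_ne_empty.2 hs)]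
      simp
    · simp
  | insert a U ha ih =>
    rw [Finset.disjoint_insert_left] at hUR
    rw [opProd_insert A hA _ _ _ ha, Module.End.mul_apply, ih hUR.2, Finset.insert_union]
    have haW : a ∉ U ∪ R := by simp [ha, hUR.1]
    generalize U ∪ R = W at haW
    set κ : Fin p → ℂ := fun j => ∏ i ∈ U, fC (-c) (w i) (w j - c) with hκ
    have hκ' : (fun j => ∏ i ∈ insert a U, fC (-c) (w i) (w j - c))
        = fun j => fC (-c) (w a) (w j - c) * κ j := by
      funext j; rw [Finset.prod_insert ha]
    rw [hκ']
    set κ' : Fin p → ℂ := fun j => fC (-c) (w a) (w j - c) * κ j with hκ'd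
    have hκa : κ' a = 0 := by simp [hκ'd, fC]
    have hκj : ∀ j, j ≠ a → κ' j * fC c (w a) (w j) = κ j := by
      intro j hj
      have h1 := sub_ne_zero.2 (hw.ne hj.symm)
      have h2 := hy a j
      have : fC (-c) (w a) (w j - c) * fC c (w a) (w j) = 1 := by
        unfold fC
        rw [show w a - (w j - c) + -c = w a - w j by ring,
          show w a - (w j - c) = w a - w j + c by ring]
        field_simp
      simp only [hκ'd]
      linear_combination κ j * this
    have hne : ∀ s ⊆ W, ∀ j ∈ s, j ≠ a := fun s hs j hj h => haW (h ▸ hs hj)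
    rw [Finset.sum_powerset_insert haW, Finset.card_insert_of_notMem ha]
    -- the left hand side
    have hL : ∀ s ∈ W.powerset, A (w a) ((((-β)⁻¹) ^ s.card * (∏ i ∈ s, lam (w i)) *
        subsetSum c w κ s * fSS c w (W \ s) s) • opProd B w (W \ s) vac)
        = (β * (((-β)⁻¹) ^ s.card * (∏ i ∈ s, lam (w i)) *
            subsetSum c w κ s * fSS c w (W \ s) s)) • opProd B w (insert a (W \ s)) vac
          + (((-β)⁻¹) ^ s.card * (∏ i ∈ s, lam (w i)) *
            subsetSum c w κ s * fSS c w (W \ s) s *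
            (lam (w a) * ∏ i ∈ W \ s, fC c (w i) (w a))) • opProd B w (W \ s) vac
          + ∑ i ∈ W \ s, (((-β)⁻¹) ^ s.card * (∏ i ∈ s, lam (w i)) *
            subsetSum c w κ s * fSS c w (W \ s) s *
            (gC c (w a) (w i) * lam (w i) * ∏ j ∈ (W \ s).erase i, fC c (w j) (w i))) •
            opProd B w (insert a ((W \ s).erase i)) vac := by
      intro s hs
      have has : a ∉ W \ s := fun h => haW (Finset.mem_sdiff.1 h).1
      rw [map_smul, single_action c β A B vac lam hAB hB hvac w hw (W \ s) (w a)
        (fun i hi h => has (hw h ▸ hi)), opProd_insert B hB _ _ _ has]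
      have : ∀ i ∈ W \ s, opProd B w (insert a ((W \ s).erase i)) vac
          = B (w a) (opProd B w ((W \ s).erase i) vac) := by
        intro i hi
        rw [opProd_insert B hB _ _ _ (fun h => has (Finset.mem_of_mem_erase h))]; rfl
      simp only [smul_add, Finset.smul_sum, smul_smul, Module.End.mul_apply]
      rw [mul_comm β]
      congr 1
      exact Finset.sum_congr rfl fun i hi => by rw [this i hi]
    rw [map_smul, map_sum, Finset.sum_congr rfl hL, Finset.sum_add_distrib,
      Finset.sum_add_distrib, sum_powerset_sdiff, pow_succ, mul_smul]
    congr 1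
    rw [smul_add, Finset.smul_sum, Finset.smul_sum, add_right_comm, ← Finset.sum_add_distrib]
    congr 1
    · refine Finset.sum_congr rfl fun s hs => ?_
      rw [Finset.mem_powerset] at hs
      have has : a ∉ W \ s := fun h => haW (Finset.mem_sdiff.1 h).1
      have has' : a ∉ s := fun h => haW (hs h)
      rw [Finset.insert_sdiff_of_notMem _ has', fSS_insert_left _ _ _ _ _ has]
      have h1 : ∀ i ∈ s, (W \ s.erase i).erase i = W \ s := by
        intro i hi
        rw [sdiff_erase_eq hi hs, Finset.erase_insert (by simp [hi])]
      rw [Finset.sum_congr rfl (fun i hi => by rw [h1 i hi]), ← Finset.sum_smul, ← add_smul,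
        smul_smul]
      congr 1
      have h2 := subsetSum_rec c w hw κ κ' a s has' (fun j hj => hκj j (hne s hs j hj))
      have h3 : ∀ i ∈ s, (-β)⁻¹ ^ (s.erase i).card * (∏ i ∈ s.erase i, lam (w i)) *
          subsetSum c w κ (s.erase i) * fSS c w (W \ s.erase i) (s.erase i) *
          (gC c (w a) (w i) * lam (w i) * ∏ j ∈ W \ s, fC c (w j) (w i))
          = (-β) * (-β)⁻¹ ^ s.card * (∏ i ∈ s, lam (w i)) * fSS c w (W \ s) s *
            (gC c (w a) (w i) * (∏ j ∈ s.erase i, fC c (w i) (w j)) *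
              subsetSum c w κ (s.erase i)) := by
        intro i hi
        have hi' : i ∉ W \ s := by simp [hi]
        have e : fSS c w (W \ s) s
            = (∏ j ∈ W \ s, fC c (w j) (w i)) * fSS c w (W \ s) (s.erase i) := by
          rw [← fSS_insert_right _ _ _ _ _ (Finset.notMem_erase _ _), Finset.insert_erase hi]
        have e2 : (-β) * (-β)⁻¹ ^ s.card = (-β)⁻¹ ^ (s.erase i).card := by
          rw [← Finset.card_erase_add_one hi, pow_succ, mul_comm, mul_assoc,
            inv_mul_cancel₀ (neg_ne_zero.2 hβ), mul_one]
        rw [sdiff_erase_eq hi hs, fSS_insert_left _ _ _ _ _ hi', e, e2,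
          ← Finset.mul_prod_erase s _ hi]
        ring
      rw [Finset.sum_congr rfl h3, ← Finset.mul_sum]
      linear_combination (-(β * (-β)⁻¹ ^ s.card * (∏ i ∈ s, lam (w i)) * fSS c w (W \ s) s)) * h2
    · refine Finset.sum_congr rfl fun s hs => ?_
      rw [Finset.mem_powerset] at hs
      have has' : a ∉ s := fun h => haW (hs h)
      rw [Finset.insert_sdiff_insert, Finset.sdiff_insert_of_notMem haW, smul_smul,
        fSS_insert_right _ _ _ _ _ has',
        subsetSum_insert c w κ κ' a s has' hκa (fun j hj => hκj j (hne s hs j hj)),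
        Finset.card_insert_of_notMem has', Finset.prod_insert has', pow_succ]
      congr 1
      have : β * (-β)⁻¹ = -1 := by field_simp
      linear_combination (((-β)⁻¹ ^ s.card * (∏ i ∈ s, lam (w i)) *
            subsetSum c w κ s * fSS c w (W \ s) s *
            (lam (w a) * ∏ i ∈ W \ s, fC c (w i) (w a)))) * this
end ops
/-- Multiple action of the modified diagonal operator `ν₁₁` on a modified Bethe vector. -/
theorem stmt2
    (c : ℂ) (hc : c ≠ 0) (β1 β2 : ℂ) (hβ1 : β1 ≠ 0) (hβ2 : β2 ≠ 0)
    (V : Type*) [AddCommGroup V] [Module ℂ V]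
    (N : Fin 2 → Fin 2 → ℂ → Module.End ℂ V)
    (vac : V) (lam1 lam2 : ℂ → ℂ)
    (hYang : ∀ (i j k l : Fin 2) (x y : ℂ), x ≠ y →
      N i j x * N k l y - N k l y * N i j x
        = gC c x y • (N k j y * N i l x - N k j x * N i l y))
    (hCommSame : ∀ (i j : Fin 2) (x y : ℂ), N i j x * N i j y = N i j y * N i j x)
    (hvac11 : ∀ x : ℂ, N 0 0 x vac = lam1 x • vac + β2 • (N 0 1 x vac))
    (hvac22 : ∀ x : ℂ, N 1 1 x vac = lam2 x • vac + β1 • (N 0 1 x vac))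
    (hvac21 : ∀ x : ℂ, N 1 0 x vac
      = (β1 * lam1 x + β2 * lam2 x) • vac + (β1 * β2) • (N 0 1 x vac))
    (n m : ℕ) (u : Fin n → ℂ) (v : Fin m → ℂ)
    (hgen : Generic c (Fin.append u v)) :
    (opProd (N 0 0) u Finset.univ * opProd (N 0 1) v Finset.univ) vac
      = β2 ^ n • ∑ s : Finset (Fin (n + m)),
          ((-β2) ^ (-(s.card : ℤ)) *
              (∏ i ∈ s, lam1 (Fin.append u v i)) *
              KIzBar c 1 u (fun i => restr (Fin.append u v) s i - c) *
              fSS c (Fin.append u v) sᶜ s) •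
            (opProd (N 0 1) (Fin.append u v) sᶜ vac) := by

  classical
  set w := Fin.append u v with hwdef
  have hw : Function.Injective w := by
    intro i j h
    by_contra hij
    exact (hgen i j hij).1 (sub_eq_zero.2 h)
  have hy : ∀ i j, w i - w j + c ≠ 0 := by
    intro i j h
    by_cases hij : i = j
    · subst hij; simp [hc] at h
    · exact (hgen i j hij).2.2.1 (eq_neg_of_add_eq_zero_left h)
  have hAB : ∀ x y, x ≠ y → N 0 0 x * N 0 1 y
      = fC c y x • (N 0 1 y * N 0 0 x) + gC c x y • (N 0 1 x * N 0 0 y) := by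
    intro x y hxy
    have h := hYang 0 1 0 0 y x hxy.symm
    rw [sub_eq_iff_eq_add] at h
    have h' : N 0 0 x * N 0 1 y = N 0 1 y * N 0 0 x -
        gC c y x • (N 0 1 x * N 0 0 y - N 0 1 y * N 0 0 x) := by
      rw [eq_sub_iff_add_eq, add_comm]; exact h.symm
    rw [h', fC_eq c y x hxy.symm, gC_swap c x y]
    module
  have hA := hCommSame 0 0
  have hB := hCommSame 0 1
  have hu : opProd (N 0 0) u Finset.univ
      = opProd (N 0 0) w (Finset.univ.map (Fin.castAddEmb m)) := by
    rw [opProd_map _ hA]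
    congr 1
    funext i; simp [hwdef]
  have hv : opProd (N 0 1) v Finset.univ
      = opProd (N 0 1) w (Finset.univ.map (Fin.natAddEmb n)) := by
    rw [opProd_map _ hB]
    congr 1
    funext i; simp [hwdef]
  have hdisj : Disjoint (Finset.univ.map (Fin.castAddEmb m : Fin n ↪ Fin (n + m)))
      (Finset.univ.map (Fin.natAddEmb n)) := by
    rw [Finset.disjoint_left]
    intro i h1 h2
    obtain ⟨a, _, rfl⟩ := Finset.mem_map.1 h1
    obtain ⟨b, _, hb⟩ := Finset.mem_map.1 h2
    have := congrArg Fin.val hb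
    simp at this
    omega
  have hun : (Finset.univ.map (Fin.castAddEmb m : Fin n ↪ Fin (n + m))) ∪
      (Finset.univ.map (Fin.natAddEmb n)) = Finset.univ := by
    ext i
    simp only [Finset.mem_union, Finset.mem_map, Finset.mem_univ, true_and, iff_true]
    induction i using Fin.addCases with
    | left i => exact Or.inl ⟨i, rfl⟩
    | right i => exact Or.inr ⟨i, rfl⟩
  rw [hu, hv, Module.End.mul_apply,
    core c β2 hc hβ2 (N 0 0) (N 0 1) vac lam1 hAB hA hB hvac11 w hw hy _ _ hdisj, hun,
    Finset.card_map, Finset.card_univ, Fintype.card_fin, Finset.powerset_univ]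
  congr 1
  refine Finset.sum_congr rfl fun s _ => ?_
  rw [KIz_eq_subsetSum c hc u w hy hw s, ← Finset.compl_eq_univ_sdiff]
  congr 4
  · rw [zpow_neg, zpow_natCast, inv_pow]
  · funext j
    rw [Finset.prod_map]
    exact Finset.prod_congr rfl fun i _ => by simp [hwdef]
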